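/- arXiv:2602.03195 — 2 statements merged into one kernel-verified Lean document; each statement's English description precedes it below -/
import Mathlib

section
/- Let V be a finite nonempty set, let π : V → ℝ be a probability mass function (π(i) ≥ 0 for all i and ∑_{i∈V} π(i) = 1), let P ⊆ V be a nonempty subset with total mass S := ∑_{i∈P} π(i) > 0, and assume the top-K property: π(k) ≤ π(i) for every k ∈ V \ P and every i ∈ P. Then for every real constant A, the total variance of the masked (renormalized) policy-gradient estimator does not exceed that of the full estimator: ∑_{i∈P} (π(i)/S)·(1 − π(i)/S)·A² ≤ ∑_{i∈V} π(i)·(1 − π(i))·A². -/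
/-!
For a distribution `p`, the total variance is `(1 - ∑ p i ^ 2) A ^ 2`, so masking must be shown not
to decrease the collision probability `∑ p i ^ 2`. This is the mean of `p` under the weights `p`.
Passing to the top set `P` raises that mean, since the values of `p` are larger on `P` than off `P`,
and renormalizing by `S ≤ 1` then scales the values up.
-/

section WeightedMean

variable {ι R : Type*} [CommSemiring R] [PartialOrder R] [IsOrderedRing R]

theorem sum_mul_mul_sum_le_sum_mul_sum_mul {κ : Type*} {s : Finset ι} {t : Finset κ}
    {v f : ι → R} {w g : κ → R} (hv : ∀ i ∈ s, 0 ≤ v i) (hw : ∀ j ∈ t, 0 ≤ w j)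
    (hfg : ∀ i ∈ s, ∀ j ∈ t, f i ≤ g j) :
    (∑ i ∈ s, v i * f i) * ∑ j ∈ t, w j ≤ (∑ i ∈ s, v i) * ∑ j ∈ t, w j * g j := by
  rw [Finset.sum_mul_sum, Finset.sum_mul_sum]
  refine Finset.sum_le_sum fun i hi => Finset.sum_le_sum fun j hj => ?_
  calc v i * f i * w j = v i * (w j * f i) := by ring
    _ ≤ v i * (w j * g j) :=
      mul_le_mul_of_nonneg_left (mul_le_mul_of_nonneg_left (hfg i hi j hj) (hw j hj)) (hv i hi)

theorem sum_mul_mul_sum_le_of_subset {s t : Finset ι} {w f : ι → R} (hts : t ⊆ s)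
    (hw : ∀ i ∈ s, 0 ≤ w i) (hf : ∀ k ∈ s, k ∉ t → ∀ i ∈ t, f k ≤ f i) :
    (∑ i ∈ s, w i * f i) * ∑ i ∈ t, w i ≤ (∑ i ∈ s, w i) * ∑ i ∈ t, w i * f i := by
  classical
  have hdiff : (∑ k ∈ s \ t, w k * f k) * ∑ i ∈ t, w i ≤
      (∑ k ∈ s \ t, w k) * ∑ i ∈ t, w i * f i :=
    sum_mul_mul_sum_le_sum_mul_sum_mul (fun k hk => hw k (Finset.sdiff_subset hk))
      (fun i hi => hw i (hts hi))
      fun k hk => hf k (Finset.mem_sdiff.mp hk).1 (Finset.mem_sdiff.mp hk).2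
  rw [← Finset.sum_sdiff hts, ← Finset.sum_sdiff (f := w) hts, add_mul, add_mul,
    mul_comm (∑ i ∈ t, w i * f i)]
  gcongr

end WeightedMean

theorem sum_mul_one_sub_mul_of_sum_eq_one {ι R : Type*} [CommRing R] {s : Finset ι} {p : ι → R}
    (hp : ∑ i ∈ s, p i = 1) (c : R) :
    ∑ i ∈ s, p i * (1 - p i) * c = (1 - ∑ i ∈ s, p i ^ 2) * c := by
  simp only [← Finset.sum_mul, mul_one_sub, ← sq, Finset.sum_sub_distrib, hp]

section OrderedField

variable {V K : Type*} [Field K] [LinearOrder K] [IsStrictOrderedRing K]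

theorem sum_sq_le_sum_div_sum_sq {s P : Finset V} {p : V → K} (hPs : P ⊆ s)
    (hp0 : ∀ i ∈ s, 0 ≤ p i) (hp1 : ∑ i ∈ s, p i = 1) (hPpos : 0 < ∑ i ∈ P, p i)
    (htop : ∀ k ∈ s, k ∉ P → ∀ i ∈ P, p k ≤ p i) :
    ∑ i ∈ s, p i ^ 2 ≤ ∑ i ∈ P, (p i / ∑ j ∈ P, p j) ^ 2 := by
  have hmean : (∑ i ∈ s, p i ^ 2) * ∑ i ∈ P, p i ≤ ∑ i ∈ P, p i ^ 2 := by
    simpa only [hp1, one_mul, ← sq] using sum_mul_mul_sum_le_of_subset hPs hp0 htop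
  have hP1 : ∑ i ∈ P, p i ≤ 1 :=
    hp1 ▸ Finset.sum_le_sum_of_subset_of_nonneg hPs fun i hi _ => hp0 i hi
  calc ∑ i ∈ s, p i ^ 2 ≤ (∑ i ∈ P, p i ^ 2) / ∑ i ∈ P, p i := (le_div_iff₀ hPpos).mpr hmean
    _ ≤ (∑ i ∈ P, p i ^ 2) / (∑ i ∈ P, p i) ^ 2 :=
      div_le_div_of_nonneg_left (Finset.sum_nonneg fun i _ => sq_nonneg (p i)) (pow_pos hPpos 2)
        (pow_le_of_le_one hPpos.le hP1 two_ne_zero)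
    _ = ∑ i ∈ P, (p i / ∑ j ∈ P, p j) ^ 2 := by simp only [div_pow, Finset.sum_div]

theorem variance_reduction_le_general [Fintype V] (π : V → K) (hπ0 : ∀ i, 0 ≤ π i)
    (hπ1 : ∑ i, π i = 1) (P : Finset V) (S : K) (hS : S = ∑ i ∈ P, π i) (hSpos : 0 < S)
    (htop : ∀ k ∉ P, ∀ i ∈ P, π k ≤ π i) (A : K) :
    ∑ i ∈ P, (π i / S) * (1 - π i / S) * A ^ 2 ≤ ∑ i, π i * (1 - π i) * A ^ 2 := by
  subst hS
  have hmasked : ∑ i ∈ P, π i / ∑ j ∈ P, π j = 1 := by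
    rw [← Finset.sum_div, div_self hSpos.ne']
  have hcollision : ∑ i, π i ^ 2 ≤ ∑ i ∈ P, (π i / ∑ j ∈ P, π j) ^ 2 :=
    sum_sq_le_sum_div_sum_sq P.subset_univ (fun i _ => hπ0 i) hπ1 hSpos fun k _ => htop k
  rw [sum_mul_one_sub_mul_of_sum_eq_one hmasked, sum_mul_one_sub_mul_of_sum_eq_one hπ1]
  gcongr

end OrderedField

/-- Proposition 1 (Variance Reduction), non-strict form: restricting a softmax
policy-gradient estimator to a top-`K` promising set `P` and renormalizing does
not increase the total variance `∑ π i (1 - π i) A²`. -/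
theorem variance_reduction_le
    {V : Type*} [Fintype V] [Nonempty V]
    (π : V → ℝ) (hπ0 : ∀ i, 0 ≤ π i) (hπ1 : ∑ i, π i = 1)
    (P : Finset V) (hP : P.Nonempty)
    (S : ℝ) (hS : S = ∑ i ∈ P, π i) (hSpos : 0 < S)
    (htop : ∀ k ∉ P, ∀ i ∈ P, π k ≤ π i)
    (A : ℝ) :
    ∑ i ∈ P, (π i / S) * (1 - π i / S) * A ^ 2 ≤
      ∑ i, π i * (1 - π i) * A ^ 2 :=
  variance_reduction_le_general π hπ0 hπ1 P S hS hSpos htop A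
end

section
/- Let V be a finite nonempty set, let π : V → ℝ be a probability mass function, let P ⊆ V be a nonempty subset with total mass S := ∑_{i∈P} π(i), and assume the top-K property: π(k) ≤ π(i) for every k ∈ V \ P and every i ∈ P. If 0 < S < 1, min_{i∈P} π(i) > 0, and A ≠ 0 is a real constant, then the variance reduction is strict: ∑_{i∈P} (π(i)/S)·(1 − π(i)/S)·A² < ∑_{i∈V} π(i)·(1 − π(i))·A². -/
/-!
Since `∑ p (1 - p) = 1 - ∑ p²` for a probability mass function `p`, the claim is that conditioning
on the top tokens strictly increases the collision probability `∑ p²`. Write `S`, `R` for the masses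
of `P` and of its complement and `Q`, `T` for the corresponding sums of squares. Each tail
probability is at most every probability in `P`, hence at most their self-weighted mean `Q / S`;
averaging over the tail gives `T S ≤ R Q`, and so `(Q + T) S² ≤ Q S (S + R) < Q (S + R)²`.
-/

theorem mul_sum_le_sum_sq {ι R : Type*} [CommSemiring R] [PartialOrder R] [IsOrderedRing R]
    {f : ι → R} {s : Finset ι} {c : R} (hf : ∀ i ∈ s, 0 ≤ f i) (hc : ∀ i ∈ s, c ≤ f i) :
    c * ∑ i ∈ s, f i ≤ ∑ i ∈ s, f i ^ 2 := by
  simp only [Finset.mul_sum, sq]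
  exact Finset.sum_le_sum fun i hi => mul_le_mul_of_nonneg_right (hc i hi) (hf i hi)

theorem sum_sq_pos_of_sum_ne_zero {ι R : Type*} [Ring R] [LinearOrder R] [IsStrictOrderedRing R]
    {f : ι → R} {s : Finset ι} (h : ∑ i ∈ s, f i ≠ 0) : 0 < ∑ i ∈ s, f i ^ 2 := by
  obtain ⟨i, hi, hfi⟩ := Finset.exists_ne_zero_of_sum_ne_zero h
  exact Finset.sum_pos' (fun j _ => sq_nonneg (f j)) ⟨i, hi, sq_pos_of_ne_zero hfi⟩

theorem sum_mul_one_sub {ι R : Type*} [Ring R] (s : Finset ι) (p : ι → R) :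
    ∑ i ∈ s, p i * (1 - p i) = ∑ i ∈ s, p i - ∑ i ∈ s, p i ^ 2 := by
  simp only [mul_one_sub, sq, Finset.sum_sub_distrib]

theorem tsum_mul_one_sub {ι R : Type*} [Ring R] [TopologicalSpace R] [IsTopologicalAddGroup R]
    [T2Space R] {p : ι → R} (hp : Summable p) (hp2 : Summable fun i => p i ^ 2) :
    ∑' i, p i * (1 - p i) = ∑' i, p i - ∑' i, p i ^ 2 := by
  simp only [mul_one_sub, ← sq, hp.tsum_sub hp2]

section Nonneg

variable {ι : Type*} {f : ι → ℝ}

theorem summable_sq_of_nonneg (hf0 : ∀ i, 0 ≤ f i) (hf : Summable f) :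
    Summable fun i => f i ^ 2 := by
  refine (hf.mul_left (∑' j, f j)).of_nonneg_of_le (fun i => sq_nonneg (f i)) fun i => ?_
  rw [sq]
  exact mul_le_mul_of_nonneg_right (hf.le_tsum i fun j _ => hf0 j) (hf0 i)

theorem tsum_sq_mul_le_tsum_mul {a b : ℝ} (hf0 : ∀ i, 0 ≤ f i) (hf : Summable f)
    (h : ∀ i, f i * a ≤ b) : (∑' i, f i ^ 2) * a ≤ (∑' i, f i) * b := by
  rw [← tsum_mul_right, ← tsum_mul_right]
  refine ((summable_sq_of_nonneg hf0 hf).mul_right a).tsum_le_tsum (fun i => ?_) (hf.mul_right b)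
  rw [sq, mul_assoc]
  exact mul_le_mul_of_nonneg_left (h i) (hf0 i)

theorem tsum_sq_div_sq_tsum_lt_sum_sq_div_sq_sum {s : Finset ι}
    (hf0 : ∀ i, 0 ≤ f i) (hf : Summable f)
    (htail : ∀ k ∉ s, f k * ∑ i ∈ s, f i ≤ ∑ i ∈ s, f i ^ 2)
    (hpos : 0 < ∑ i ∈ s, f i) (hlt : ∑ i ∈ s, f i < ∑' i, f i) :
    (∑' i, f i ^ 2) / (∑' i, f i) ^ 2 < (∑ i ∈ s, f i ^ 2) / (∑ i ∈ s, f i) ^ 2 := by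
  have hQ : 0 < ∑ i ∈ s, f i ^ 2 := sum_sq_pos_of_sum_ne_zero hpos.ne'
  have hTS : (∑' k : {k // k ∉ s}, f k ^ 2) * ∑ i ∈ s, f i ≤
      (∑' k : {k // k ∉ s}, f k) * ∑ i ∈ s, f i ^ 2 :=
    tsum_sq_mul_le_tsum_mul (fun k => hf0 k) (hf.subtype _) fun k => htail k k.2
  rw [div_lt_div_iff₀ (pow_pos (hpos.trans hlt) 2) (pow_pos hpos 2)]
  rw [← hf.sum_add_tsum_subtype_compl s] at hlt ⊢
  rw [← (summable_sq_of_nonneg hf0 hf).sum_add_tsum_subtype_compl s]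
  set S := ∑ i ∈ s, f i
  set R := ∑' k : {k // k ∉ s}, f k
  set Q := ∑ i ∈ s, f i ^ 2
  set T := ∑' k : {k // k ∉ s}, f k ^ 2
  calc (Q + T) * S ^ 2 = (Q * S + T * S) * S := by ring
    _ ≤ (Q * S + R * Q) * S := by gcongr
    _ = Q * (S + R) * S := by ring
    _ < Q * (S + R) * (S + R) :=
      mul_lt_mul_of_pos_left hlt (mul_pos hQ (hpos.trans hlt))
    _ = Q * (S + R) ^ 2 := by ring

end Nonneg

theorem variance_reduction_lt_general {V : Type*}
    (π : V → ℝ) (hπ0 : ∀ i, 0 ≤ π i) (hπ1 : HasSum π 1)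
    (P : Finset V) (S : ℝ) (hS : S = ∑ i ∈ P, π i)
    (htop : ∀ k ∉ P, ∀ i ∈ P, π k ≤ π i)
    (hSpos : 0 < S) (hSlt : S < 1) (A : ℝ) (hA : A ≠ 0) :
    ∑ i ∈ P, (π i / S) * (1 - π i / S) * A ^ 2 <
      ∑' i, π i * (1 - π i) * A ^ 2 := by
  have hmasked : ∑ i ∈ P, (π i / S) * (1 - π i / S) = 1 - (∑ i ∈ P, π i ^ 2) / S ^ 2 := by
    simp only [sum_mul_one_sub, div_pow, ← Finset.sum_div, ← hS, div_self hSpos.ne']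
  have hfull : ∑' i, π i * (1 - π i) = 1 - ∑' i, π i ^ 2 := by
    rw [tsum_mul_one_sub hπ1.summable (summable_sq_of_nonneg hπ0 hπ1.summable), hπ1.tsum_eq]
  have hcollision : ∑' i, π i ^ 2 < (∑ i ∈ P, π i ^ 2) / S ^ 2 := by
    simpa only [hπ1.tsum_eq, one_pow, div_one, ← hS] using
      tsum_sq_div_sq_tsum_lt_sum_sq_div_sq_sum hπ0 hπ1.summable
        (fun k hk => mul_sum_le_sum_sq (fun i _ => hπ0 i) (htop k hk))
        (hS ▸ hSpos) (by rwa [hπ1.tsum_eq, ← hS])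
  rw [← Finset.sum_mul, tsum_mul_right, hmasked, hfull]
  exact mul_lt_mul_of_pos_right (sub_lt_sub_left hcollision 1) (sq_pos_of_ne_zero hA)

/-- Proposition 1 (Variance Reduction), strict form: if the masked-out tail
carries strictly positive mass (`S < 1`), every promising token has positive
probability, and the advantage `A` is nonzero, then the total variance of the
renormalized masked estimator is strictly smaller than that of the full one. -/
theorem variance_reduction_lt
    {V : Type*} [Fintype V] [Nonempty V]
    (π : V → ℝ) (hπ0 : ∀ i, 0 ≤ π i) (hπ1 : ∑ i, π i = 1)
    (P : Finset V) (hP : P.Nonempty)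
    (S : ℝ) (hS : S = ∑ i ∈ P, π i)
    (htop : ∀ k ∉ P, ∀ i ∈ P, π k ≤ π i)
    (hSpos : 0 < S) (hSlt : S < 1)
    (hmin : 0 < P.inf' hP π)
    (A : ℝ) (hA : A ≠ 0) :
    ∑ i ∈ P, (π i / S) * (1 - π i / S) * A ^ 2 <
      ∑ i, π i * (1 - π i) * A ^ 2 := by
  simpa only [tsum_fintype] using variance_reduction_lt_general π hπ0
    (hπ1 ▸ hasSum_fintype π) P S hS htop hSpos hSlt A hA
end
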